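/- Let M ∈ K^{p×p} be invertible. Then the tensor rank of the tensor-tensor multiplication TM_{⟨m,n,s⟩,p} : K^{m×n×p} × K^{n×s×p} → K^{m×s×p}, (A,B) ↦ A *_M B, satisfies R(TM_{⟨m,n,s⟩,p}) ≥ max{mnp, nsp, msp}. -/

import Mathlib

open Matrix

/-- Mode-3 product of a third-order tensor (stack of `p` frontal slices)
with a matrix `M ∈ K^{q×p}`: `(A ×₃ M)ₖ = Σ_l M k l • A l`. -/
def mode3 {K : Type*} [Semiring K] {m n p q : ℕ} (M : Matrix (Fin q) (Fin p) K)
    (A : Fin p → Matrix (Fin m) (Fin n) K) : Fin q → Matrix (Fin m) (Fin n) K :=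
  fun k => ∑ l, M k l • A l

/-- Face-wise product of two third-order tensors. -/
def facewise {K : Type*} [Semiring K] {m n s p : ℕ}
    (A : Fin p → Matrix (Fin m) (Fin n) K) (B : Fin p → Matrix (Fin n) (Fin s) K) :
    Fin p → Matrix (Fin m) (Fin s) K :=
  fun i => A i * B i

/-- Tensor-tensor multiplication `A *_M B = ((A ×₃ M) △ (B ×₃ M)) ×₃ M⁺`. -/
def tmul3 {K : Type*} [Semiring K] {m n s p q : ℕ} (M : Matrix (Fin q) (Fin p) K)
    (Mp : Matrix (Fin p) (Fin q) K)
    (A : Fin p → Matrix (Fin m) (Fin n) K) (B : Fin p → Matrix (Fin n) (Fin s) K) :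
    Fin p → Matrix (Fin m) (Fin s) K :=
  mode3 Mp (facewise (mode3 M A) (mode3 M B))

/-- Tensor rank (bilinear complexity) of a bilinear map `T : U × V → W`. -/
noncomputable def tensorRank (K : Type*) [Field K] {U V W : Type*}
    [AddCommGroup U] [Module K U] [AddCommGroup V] [Module K V]
    [AddCommGroup W] [Module K W] (T : U → V → W) : ℕ :=
  sInf {r : ℕ | ∃ (α : Fin r → U →ₗ[K] K) (β : Fin r → V →ₗ[K] K) (w : Fin r → W),
    ∀ u v, T u v = ∑ i, (α i u * β i v) • w i}

/-!
In a decomposition `T u v = ∑ i : Fin r, (α i u * β i v) • w i`, a vector killed by all the `α i` is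
in the left kernel of `T`, so `r ≥ dim U` if that kernel is trivial; symmetrically `r ≥ dim V` if
the right kernel is trivial; and the `w i` span the image of `T`, so `r ≥ dim W` if the image spans
`W`. Tensor rank does not change under invertible linear substitutions in `U`, `V` and `W`, and
since `M` is invertible, `A ↦ A ×₃ M` is such a substitution. Hence `*_M` has the same rank as the
face-wise product, for which multiplication by elementary matrices makes all three properties
visible.
-/

section TensorDecomposition

variable {R : Type*} [CommSemiring R] {U U' V V' W W' : Type*}
  [AddCommMonoid U] [Module R U] [AddCommMonoid U'] [Module R U']
  [AddCommMonoid V] [Module R V] [AddCommMonoid V'] [Module R V']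
  [AddCommMonoid W] [Module R W] [AddCommMonoid W'] [Module R W']

variable (R) in
/-- `T` is a sum of `r` bilinear maps of the rank-one form `(u, v) ↦ (α u * β v) • w`, so that
`tensorRank K T` is the least `r` with `HasTensorDecomposition K T r`. -/
def HasTensorDecomposition (T : U → V → W) (r : ℕ) : Prop :=
  ∃ (α : Fin r → U →ₗ[R] R) (β : Fin r → V →ₗ[R] R) (w : Fin r → W),
    ∀ u v, T u v = ∑ i, (α i u * β i v) • w i

namespace HasTensorDecomposition

theorem comp_linearMap {T : U → V → W} {r : ℕ} (h : HasTensorDecomposition R T r)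
    (f : U' →ₗ[R] U) (g : V' →ₗ[R] V) (e : W →ₗ[R] W') :
    HasTensorDecomposition R (fun u v => e (T (f u) (g v))) r := by
  obtain ⟨α, β, w, hT⟩ := h
  exact ⟨fun i => α i ∘ₗ f, fun i => β i ∘ₗ g, fun i => e (w i), fun u v => by simp [hT]⟩

theorem flip {T : U → V → W} {r : ℕ} (h : HasTensorDecomposition R T r) :
    HasTensorDecomposition R (fun v u => T u v) r := by
  obtain ⟨α, β, w, hT⟩ := h
  exact ⟨β, α, w, fun v u => by simp only [hT, mul_comm]⟩

theorem finrank_le_of_map₂_eq_top [StrongRankCondition R] {T : U →ₗ[R] V →ₗ[R] W} {r : ℕ}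
    (h : HasTensorDecomposition R (fun u v => T u v) r) (hT : Submodule.map₂ T ⊤ ⊤ = ⊤) :
    Module.finrank R W ≤ r := by
  obtain ⟨α, β, w, hw⟩ := h
  have hspan : Submodule.span R (Set.range w) = ⊤ := by
    rw [eq_top_iff, ← hT, Submodule.map₂_le]
    intro u _ v _
    rw [show T u v = _ from hw u v]
    exact Submodule.sum_mem _ fun i _ => Submodule.smul_mem _ _ (Submodule.subset_span ⟨i, rfl⟩)
  simpa using finrank_le_of_span_eq_top hspan

end HasTensorDecomposition

theorem exists_hasTensorDecomposition [Module.Free R U] [Module.Finite R U] [Module.Free R V]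
    [Module.Finite R V] (T : U →ₗ[R] V →ₗ[R] W) :
    ∃ r, HasTensorDecomposition R (fun u v => T u v) r := by
  let b := Module.Free.chooseBasis R U
  let c := Module.Free.chooseBasis R V
  let e := Fintype.equivFin
    (Module.Free.ChooseBasisIndex R U × Module.Free.ChooseBasisIndex R V)
  refine ⟨_, fun k => b.coord (e.symm k).1, fun k => c.coord (e.symm k).2,
    fun k => T (b (e.symm k).1) (c (e.symm k).2), fun u v => ?_⟩
  calc T u v = ∑ i, ∑ j, (b.repr u i * c.repr v j) • T (b i) (c j) := by
        simpa [Finsupp.sum_fintype, mul_smul] using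
          (LinearMap.sum_repr_mul_repr_mul b c (B := T) u v).symm
    _ = ∑ x : _ × _, (b.coord x.1 u * c.coord x.2 v) • T (b x.1) (c x.2) :=
        (Fintype.sum_prod_type' _).symm
    _ = _ := (Equiv.sum_comp e.symm _).symm

end TensorDecomposition

section FinrankBounds

variable {R : Type*} [CommRing R] [StrongRankCondition R] {U V W : Type*}
  [AddCommGroup U] [Module R U] [AddCommGroup V] [Module R V] [AddCommGroup W] [Module R W]
  {T : U →ₗ[R] V →ₗ[R] W} {r : ℕ}

namespace HasTensorDecomposition

theorem finrank_le_of_separatingLeft (h : HasTensorDecomposition R (fun u v => T u v) r)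
    (hT : T.SeparatingLeft) : Module.finrank R U ≤ r := by
  obtain ⟨α, β, w, hw⟩ := h
  have hinj : Function.Injective (LinearMap.pi α) := by
    refine (injective_iff_map_eq_zero _).2 fun u hu => hT u fun v => ?_
    have hα : ∀ i, α i u = 0 := congrFun hu
    simp [hw, hα]
  simpa using LinearMap.finrank_le_finrank_of_injective hinj

theorem finrank_le_of_separatingRight (h : HasTensorDecomposition R (fun u v => T u v) r)
    (hT : T.SeparatingRight) : Module.finrank R V ≤ r :=
  finrank_le_of_separatingLeft (T := T.flip) h.flip (LinearMap.flip_separatingLeft.2 hT)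

end HasTensorDecomposition

end FinrankBounds

section TensorRank

variable {K : Type*} [Field K] {U U' V V' W W' : Type*}
  [AddCommGroup U] [Module K U] [AddCommGroup U'] [Module K U']
  [AddCommGroup V] [Module K V] [AddCommGroup V'] [Module K V']
  [AddCommGroup W] [Module K W] [AddCommGroup W'] [Module K W']

/- `tensorRank` has the junk value `sInf ∅ = 0` when there is no decomposition, so a lower bound
requires that one exists. -/
theorem hasTensorDecomposition_tensorRank [FiniteDimensional K U] [FiniteDimensional K V]
    (T : U →ₗ[K] V →ₗ[K] W) :
    HasTensorDecomposition K (fun u v => T u v) (tensorRank K fun u v => T u v) :=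
  Nat.sInf_mem (exists_hasTensorDecomposition T)

theorem tensorRank_comp_linearEquiv (T : U → V → W) (f : U' ≃ₗ[K] U) (g : V' ≃ₗ[K] V)
    (e : W ≃ₗ[K] W') : tensorRank K (fun u v => e (T (f u) (g v))) = tensorRank K T := by
  suffices ∀ r, HasTensorDecomposition K (fun u v => e (T (f u) (g v))) r ↔
      HasTensorDecomposition K T r from congrArg sInf (Set.ext this)
  refine fun r => ⟨fun h => ?_, fun h => h.comp_linearMap f.toLinearMap g.toLinearMap e.toLinearMap⟩
  simpa using h.comp_linearMap f.symm.toLinearMap g.symm.toLinearMap e.symm.toLinearMap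

end TensorRank

section Mode3

variable {m n p q t : ℕ}

theorem mode3_mode3 {R : Type*} [Semiring R] (N : Matrix (Fin t) (Fin q) R)
    (M : Matrix (Fin q) (Fin p) R) (A : Fin p → Matrix (Fin m) (Fin n) R) :
    mode3 N (mode3 M A) = mode3 (N * M) A := by
  ext k : 1
  simp only [mode3, Finset.smul_sum, smul_smul, Matrix.mul_apply, Finset.sum_smul]
  exact Finset.sum_comm

theorem mode3_one {R : Type*} [Semiring R] (A : Fin p → Matrix (Fin m) (Fin n) R) :
    mode3 1 A = A := by
  ext k : 1
  simp [mode3, Matrix.one_apply, ite_smul]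

/-- The mode-3 product `A ↦ A ×₃ M` as a linear map. -/
def mode3Linear {R : Type*} [CommSemiring R] (M : Matrix (Fin q) (Fin p) R) :
    (Fin p → Matrix (Fin m) (Fin n) R) →ₗ[R] (Fin q → Matrix (Fin m) (Fin n) R) where
  toFun := mode3 M
  map_add' A B := by
    ext k : 1
    simp [mode3, Finset.sum_add_distrib]
  map_smul' c A := by
    ext k : 1
    simp [mode3, Finset.smul_sum, smul_comm c]

/-- The mode-3 product with an invertible matrix as a linear equivalence, with inverse
`A ↦ A ×₃ M⁻¹`. -/
noncomputable def mode3Equiv {R : Type*} [CommRing R] (M : Matrix (Fin p) (Fin p) R)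
    (hM : IsUnit M.det) :
    (Fin p → Matrix (Fin m) (Fin n) R) ≃ₗ[R] (Fin p → Matrix (Fin m) (Fin n) R) :=
  LinearEquiv.ofLinearMap (mode3Linear M) (mode3Linear M⁻¹)
    (LinearMap.ext fun A => by
      change mode3 M (mode3 M⁻¹ A) = A
      rw [mode3_mode3, Matrix.mul_nonsing_inv _ hM, mode3_one])
    (LinearMap.ext fun A => by
      change mode3 M⁻¹ (mode3 M A) = A
      rw [mode3_mode3, Matrix.nonsing_inv_mul _ hM, mode3_one])

end Mode3

section MatrixMul

variable {R l m n : Type*} [NonAssocSemiring R] [Fintype m]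

theorem matrix_eq_zero_of_forall_right_mul_eq_zero [Nonempty n] {A : Matrix l m R}
    (h : ∀ B : Matrix m n R, A * B = 0) : A = 0 := by
  classical
  obtain ⟨k⟩ := ‹Nonempty n›
  ext i j
  simpa using congrFun₂ (h (single j k 1)) i k

theorem matrix_eq_zero_of_forall_left_mul_eq_zero [Nonempty l] {B : Matrix m n R}
    (h : ∀ A : Matrix l m R, A * B = 0) : B = 0 := by
  classical
  obtain ⟨k⟩ := ‹Nonempty l›
  ext i j
  simpa using congrFun₂ (h (single k i 1)) k j

theorem sum_single_mul_replicateRow [Fintype l] [DecidableEq l] [DecidableEq m] (k : m)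
    (C : Matrix l n R) : ∑ i, single i k (1 : R) * replicateRow m (C i) = C := by
  ext i j
  simp [Matrix.sum_apply, Matrix.mul_apply, Matrix.single_apply, ite_and]

end MatrixMul

section Facewise

variable {R : Type*} [CommSemiring R] {m n s p : ℕ}

/-- The face-wise product as a bilinear map. -/
def facewiseBilinear : (Fin p → Matrix (Fin m) (Fin n) R) →ₗ[R]
    (Fin p → Matrix (Fin n) (Fin s) R) →ₗ[R] (Fin p → Matrix (Fin m) (Fin s) R) :=
  LinearMap.mk₂ R facewise
    (fun A A' B => funext fun k => Matrix.add_mul (A k) (A' k) (B k))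
    (fun c A B => funext fun k => Matrix.smul_mul c (A k) (B k))
    (fun A B B' => funext fun k => Matrix.mul_add (A k) (B k) (B' k))
    (fun c A B => funext fun k => Matrix.mul_smul (A k) c (B k))

theorem facewiseBilinear_separatingLeft [NeZero s] :
    (facewiseBilinear (R := R) (m := m) (n := n) (s := s) (p := p)).SeparatingLeft :=
  fun _ h => funext fun k =>
    matrix_eq_zero_of_forall_right_mul_eq_zero fun B => congrFun (h fun _ => B) k

theorem facewiseBilinear_separatingRight [NeZero m] :
    (facewiseBilinear (R := R) (m := m) (n := n) (s := s) (p := p)).SeparatingRight :=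
  fun _ h => funext fun k =>
    matrix_eq_zero_of_forall_left_mul_eq_zero fun A => congrFun (h fun _ => A) k

theorem map₂_facewiseBilinear_eq_top [NeZero n] :
    Submodule.map₂ (facewiseBilinear (R := R) (m := m) (n := n) (s := s) (p := p)) ⊤ ⊤ = ⊤ := by
  refine eq_top_iff.2 fun C _ => ?_
  have hC : ∑ i, facewiseBilinear (fun _ => single i (0 : Fin n) 1)
      (fun k => replicateRow (Fin n) (C k i)) = C := by
    ext1 k
    rw [Finset.sum_apply]
    exact sum_single_mul_replicateRow (0 : Fin n) (C k)
  rw [← hC]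
  exact Submodule.sum_mem _ fun i _ => Submodule.apply_mem_map₂ _ trivial trivial

end Facewise

theorem finrank_tensor (R : Type*) [Semiring R] [StrongRankCondition R] (m n p : ℕ) :
    Module.finrank R (Fin p → Matrix (Fin m) (Fin n) R) = m * n * p := by
  simp [Module.finrank_pi_fintype, Module.finrank_matrix, mul_comm]

theorem tensorRank_facewise_ge_max {K : Type*} [Field K] {m n s p : ℕ}
    (hm : 0 < m) (hn : 0 < n) (hs : 0 < s) :
    max (m * n * p) (max (n * s * p) (m * s * p)) ≤
      tensorRank K (facewise : (Fin p → Matrix (Fin m) (Fin n) K) →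
        (Fin p → Matrix (Fin n) (Fin s) K) → Fin p → Matrix (Fin m) (Fin s) K) := by
  have : NeZero m := .of_pos hm
  have : NeZero n := .of_pos hn
  have : NeZero s := .of_pos hs
  have h := hasTensorDecomposition_tensorRank
    (facewiseBilinear (R := K) (m := m) (n := n) (s := s) (p := p))
  refine max_le ?_ (max_le ?_ ?_) <;> rw [← finrank_tensor K]
  · exact h.finrank_le_of_separatingLeft facewiseBilinear_separatingLeft
  · exact h.finrank_le_of_separatingRight facewiseBilinear_separatingRight
  · exact h.finrank_le_of_map₂_eq_top map₂_facewiseBilinear_eq_top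

theorem tensorRank_tmul3 {K : Type*} [Field K] {m n s p : ℕ} {M N : Matrix (Fin p) (Fin p) K}
    (hM : IsUnit M.det) (hN : IsUnit N.det) :
    tensorRank K (tmul3 (m := m) (n := n) (s := s) M N) =
      tensorRank K (facewise (K := K) (m := m) (n := n) (s := s) (p := p)) :=
  tensorRank_comp_linearEquiv facewise (mode3Equiv M hM) (mode3Equiv M hM) (mode3Equiv N hN)

theorem tensorRank_tmul3_ge_max_general {K : Type*} [Field K] {m n s p : ℕ}
    (hm : 0 < m) (hn : 0 < n) (hs : 0 < s)
    (M N : Matrix (Fin p) (Fin p) K) (hM : IsUnit M.det) (hN : IsUnit N.det) :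
    max (m * n * p) (max (n * s * p) (m * s * p)) ≤
      tensorRank K (tmul3 (m := m) (n := n) (s := s) M N) :=
  (tensorRank_facewise_ge_max hm hn hs).trans_eq (tensorRank_tmul3 hM hN).symm

/-- for invertible `M ∈ K^{p×p}`, the tensor rank of the tensor-tensor
multiplication `TM_{⟨m,n,s⟩,p} : K^{m×n×p} × K^{n×s×p} → K^{m×s×p}` satisfies
`R(TM_{⟨m,n,s⟩,p}) ≥ max {mnp, nsp, msp}`. -/
theorem tensorRank_tmul3_ge_max {K : Type*} [RCLike K] {m n s p : ℕ}
    (hm : 0 < m) (hn : 0 < n) (hs : 0 < s)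
    (M : Matrix (Fin p) (Fin p) K) (hM : IsUnit M.det) :
    max (m * n * p) (max (n * s * p) (m * s * p)) ≤
      tensorRank K (fun (A : Fin p → Matrix (Fin m) (Fin n) K)
        (B : Fin p → Matrix (Fin n) (Fin s) K) => tmul3 M M⁻¹ A B) :=
  tensorRank_tmul3_ge_max_general hm hn hs M M⁻¹ hM (M.isUnit_nonsing_inv_det hM)
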